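/- arXiv:2008.09531 — 2 statements merged into one kernel-verified Lean document; each statement's English description precedes it below -/
import Mathlib

section
/- Let K be a field of characteristic 0, let m ≥ 2 be even, let l ≥ 1, let A ⊆ ℤ be a finite set with |A| = m·(l+1), and fix an element a ∈ A. Then the hyper-Pfaffian forms satisfy the Laplace-type expansion hpf^{(m,l+1)}_A = Σ_{I ⊆ A, |I| = m, a ∈ I} sgn(I, A∖I) · x_I · hpf^{(m,l)}_{A∖I}, where sgn(I, A∖I) is the sign of the permutation of A taking its increasing enumeration to the increasing enumeration of I followed by the increasing enumeration of A∖I. -/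
/-!
The sum defining `hpfPoly` can be indexed by honest unordered partitions, i.e. finsets `P` of
`m`-element blocks (`hpfPoly_eq_sum_blockPartitions`): every partition has exactly one enumeration
by strictly increasing minima. The sign of a concatenation of increasing lists is the
product over pairs of blocks `i < j` of the cross sign `(-1) ^ #{(x, y) ∈ I_i × I_j | y < x}`
(`blocksSign_ofFn`), and for disjoint blocks of even size the cross sign is symmetric, because the
two cross counts add up to `|I| * |J|` (`crossSign_comm`). Hence splitting off one block `I` from
`P` splits off the factor `∏ J ∈ P \ {I}, crossSign I J = crossSign I (A \ I)`
(`pairSign_insert`), which is `sgn(I, A \ I)`. The expansion follows since a partition `P` of `A`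
is the same as the block `I ∋ a` together with a partition of `A \ I`
(`sum_blockPartitions_succ`).
-/

open scoped BigOperators

/-- Number of inversions of a list over a linear order. -/
def inversions {α : Type*} [LinearOrder α] (L : List α) : ℕ :=
  (Finset.univ.filter fun p : Fin L.length × Fin L.length =>
    p.1 < p.2 ∧ L.get p.2 < L.get p.1).card

/-- Sign of a list of distinct elements: the sign of the permutation taking the increasing
enumeration of its set of entries to the list itself. -/
def listSign {α : Type*} [LinearOrder α] (L : List α) : ℤ :=
  (-1) ^ inversions L

/-- `sgn(I₁,…,I_l)`: the sign of the permutation of `A = I₁ ∪ ⋯ ∪ I_l` taking the increasing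
enumeration of `A` to the concatenation of the increasing enumerations of the blocks. -/
def blocksSign {α : Type*} [LinearOrder α] (Is : List (Finset α)) : ℤ :=
  listSign (Is.flatMap fun I => I.sort (· ≤ ·))

/-- The (unordered) hyper-Pfaffian form `hpf^{(m,l)}_A` as a polynomial in the variables
`x_I` (`I` running over the `m`-element subsets of `A`): the sum over all unordered
partitions of `A` into `m`-element blocks — each represented by the unique ordered tuple
whose blocks have strictly increasing minima — of `sgn(I₁,…,I_l)·x_{I₁}⋯x_{I_l}`. -/
noncomputable def hpfPoly (K : Type*) [Field K] {α : Type*} [LinearOrder α]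
    (m l : ℕ) (A : Finset α) : MvPolynomial (Finset α) K :=
  ∑ f ∈ Fintype.piFinset (fun _ : Fin l => Finset.powersetCard m A),
    if (∀ i j : Fin l, i ≠ j → Disjoint (f i) (f j)) ∧ Finset.univ.sup f = A ∧
        (∀ i j : Fin l, i < j → (f i).min < (f j).min) then
      (blocksSign (List.ofFn f) : MvPolynomial (Finset α) K) * ∏ t, MvPolynomial.X (f t)
    else 0


section HyperPfaffian

variable {α : Type*} [LinearOrder α]

/-! ### Signs of concatenations of increasing lists -/

lemma sum_get_eq_countP {β : Type*} (p : β → Prop) [DecidablePred p] (L : List β) :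
    (∑ i : Fin L.length, if p (L.get i) then 1 else 0) = L.countP p := by
  induction L with
  | nil => simp
  | cons x L ih =>
    simp only [List.length_cons, Fin.sum_univ_succ, List.countP_cons]
    simp only [List.get_eq_getElem] at ih
    simp only [List.get_eq_getElem, Fin.val_zero, Fin.val_succ, List.getElem_cons_zero,
      List.getElem_cons_succ, ih]
    by_cases h : p x <;> simp [h, add_comm]

lemma inversions_eq_sum (L : List α) :
    inversions L = ∑ i : Fin L.length, ∑ j : Fin L.length,
      if i < j ∧ L.get j < L.get i then 1 else 0 := by
  rw [inversions, Finset.card_filter, ← Finset.univ_product_univ, Finset.sum_product]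

lemma inversions_cons (x : α) (L : List α) :
    inversions (x :: L) = L.countP (· < x) + inversions L := by
  rw [inversions_eq_sum, inversions_eq_sum, ← sum_get_eq_countP]
  simp only [List.length_cons, Fin.sum_univ_succ, List.get_eq_getElem, Fin.val_zero, Fin.val_succ,
    List.getElem_cons_zero, List.getElem_cons_succ, Fin.succ_pos, Fin.not_lt_zero,
    Fin.succ_lt_succ_iff, false_and, true_and, if_false, zero_add]

lemma inversions_append (L M : List α) :
    inversions (L ++ M) =
      inversions L + inversions M + (L.map fun x => M.countP (· < x)).sum := by
  induction L with
  | nil => simp [inversions]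
  | cons x L ih =>
    simp only [List.cons_append, inversions_cons, ih, List.countP_append, List.map_cons,
      List.sum_cons]
    ring

lemma inversions_eq_zero_of_pairwise (L : List α) (h : L.Pairwise (· ≤ ·)) :
    inversions L = 0 := by
  induction L with
  | nil => simp [inversions]
  | cons x L ih =>
    rw [List.pairwise_cons] at h
    rw [inversions_cons, ih h.2, List.countP_eq_zero.2]
    intro y hy
    simpa using h.1 y hy

/-- The number of pairs `(x, y) ∈ I × J` with `y < x`. -/
def crossInv (I J : Finset α) : ℕ := ∑ x ∈ I, ∑ y ∈ J, if y < x then 1 else 0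

/-- The sign contributed by the inversions between a block `I` and a later block `J`. -/
def crossSign (I J : Finset α) : ℤ := (-1) ^ crossInv I J

lemma countP_sort (J : Finset α) (x : α) :
    (J.sort (· ≤ ·)).countP (· < x) = ∑ y ∈ J, if y < x then 1 else 0 := by
  conv_rhs => rw [← Finset.sort_toFinset J (· ≤ ·),
    List.sum_toFinset _ (Finset.sort_nodup J (· ≤ ·))]
  induction J.sort (· ≤ ·) with
  | nil => simp
  | cons z L ih => simp [List.countP_cons, ih, add_comm]

lemma sum_map_sort (I : Finset α) (g : α → ℕ) :
    ((I.sort (· ≤ ·)).map g).sum = ∑ x ∈ I, g x := by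
  conv_rhs => rw [← Finset.sort_toFinset I (· ≤ ·),
    List.sum_toFinset _ (Finset.sort_nodup I (· ≤ ·))]

lemma sum_countP_flatMap (I : Finset α) (Is : List (Finset α)) :
    ∑ x ∈ I, (Is.flatMap fun J => J.sort (· ≤ ·)).countP (· < x) =
      (Is.map (crossInv I)).sum := by
  induction Is with
  | nil => simp
  | cons J Is ih =>
    simp only [List.flatMap_cons, List.countP_append, Finset.sum_add_distrib, ih,
      List.map_cons, List.sum_cons, countP_sort, crossInv]

lemma blocksSign_cons (I : Finset α) (Is : List (Finset α)) :
    blocksSign (I :: Is) = (Is.map (crossSign I)).prod * blocksSign Is := by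
  have key : ∀ Js : List (Finset α),
      (Js.map (crossSign I)).prod = (-1) ^ (Js.map (crossInv I)).sum := by
    intro Js
    induction Js with
    | nil => simp
    | cons J Js ih => simp [ih, pow_add, crossSign]
  rw [blocksSign, blocksSign, listSign, listSign, List.flatMap_cons, inversions_append,
    inversions_eq_zero_of_pairwise _ (Finset.pairwise_sort I (· ≤ ·)), sum_map_sort,
    sum_countP_flatMap, key, zero_add, pow_add, mul_comm]

lemma blocksSign_nil : blocksSign ([] : List (Finset α)) = 1 := by
  rw [blocksSign, listSign, inversions_eq_zero_of_pairwise _ (by simp), pow_zero]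

lemma blocksSign_pair (I J : Finset α) : blocksSign [I, J] = crossSign I J := by
  simp [blocksSign_cons, blocksSign_nil]

lemma blocksSign_ofFn {l : ℕ} (f : Fin l → Finset α) :
    blocksSign (List.ofFn f) = ∏ i, ∏ j, if i < j then crossSign (f i) (f j) else 1 := by
  induction l with
  | zero => simp [blocksSign_nil]
  | succ l ih =>
    rw [List.ofFn_succ, blocksSign_cons, ih]
    simp [Fin.prod_univ_succ, List.map_ofFn, List.prod_ofFn]

/-- Exchanging two disjoint blocks, one of them of even size, does not change the sign. -/
lemma crossSign_comm (I J : Finset α) (hd : Disjoint I J) (hI : Even I.card) :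
    crossSign I J = crossSign J I := by
  have h : crossInv I J + crossInv J I = I.card * J.card := by
    have h2 : crossInv J I = ∑ x ∈ I, ∑ y ∈ J, if x < y then 1 else 0 := by
      rw [crossInv, Finset.sum_comm]
    rw [h2, crossInv, ← Finset.sum_add_distrib]
    simp_rw [← Finset.sum_add_distrib]
    have : ∀ x ∈ I, ∀ y ∈ J, ((if y < x then 1 else 0) + if x < y then 1 else 0 : ℕ) = 1 := by
      intro x hx y hy
      rcases lt_trichotomy x y with h | h | h
      · simp [h, h.le]
      · subst h
        exact absurd hy (Finset.disjoint_left.1 hd hx)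
      · simp [h, h.le]
    refine (Finset.sum_congr rfl fun x hx =>
      Finset.sum_congr rfl fun y hy => this x hx y hy).trans ?_
    simp
  have he : Even (crossInv I J + crossInv J I) := h ▸ hI.mul_right _
  unfold crossSign
  rcases Nat.even_or_odd (crossInv I J) with h1 | h1
  · rw [h1.neg_one_pow, ((Nat.even_add.1 he).1 h1).neg_one_pow]
  · have : Odd (crossInv J I) := by
      rw [← Nat.not_even_iff_odd] at h1 ⊢
      exact fun h3 => h1 ((Nat.even_add.1 he).2 h3)
    rw [h1.neg_one_pow, this.neg_one_pow]

lemma crossSign_sup (I : Finset α) (Q : Finset (Finset α))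
    (hQ : ∀ J ∈ Q, ∀ J' ∈ Q, J ≠ J' → Disjoint J J') :
    crossSign I (Q.sup id) = ∏ J ∈ Q, crossSign I J := by
  unfold crossSign
  rw [Finset.prod_pow_eq_pow_sum]
  congr 1
  unfold crossInv
  rw [Finset.sup_eq_biUnion]
  conv_rhs => rw [Finset.sum_comm]
  refine Finset.sum_congr rfl fun x _ => ?_
  exact Finset.sum_biUnion fun J hJ T hT h => hQ J hJ T hT h

/-! ### Unordered partitions into blocks -/

/-- The sign of an unordered family of blocks: the product of the cross signs of all pairs of
blocks, each pair being ordered by its minima. -/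
def pairSign (P : Finset (Finset α)) : ℤ :=
  ∏ I ∈ P, ∏ J ∈ P, if I.min < J.min then crossSign I J else 1

/-- The partitions of `A` into `l` blocks of size `m`, as sets of blocks. -/
def blockPartitions (m l : ℕ) (A : Finset α) : Finset (Finset (Finset α)) :=
  ((Finset.powersetCard m A).powersetCard l).filter fun P =>
    (∀ I ∈ P, ∀ J ∈ P, I ≠ J → Disjoint I J) ∧ P.sup id = A

lemma mem_blockPartitions {m l : ℕ} {A : Finset α} {P : Finset (Finset α)} :
    P ∈ blockPartitions m l A ↔ P.card = l ∧ (∀ I ∈ P, I.card = m) ∧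
      (∀ I ∈ P, ∀ J ∈ P, I ≠ J → Disjoint I J) ∧ P.sup id = A := by
  simp only [blockPartitions, Finset.mem_filter, Finset.mem_powersetCard]
  constructor
  · rintro ⟨⟨h1, h2⟩, h3, h4⟩
    exact ⟨h2, fun I hI => (Finset.mem_powersetCard.1 (h1 hI)).2, h3, h4⟩
  · rintro ⟨h1, h2, h3, h4⟩
    refine ⟨⟨fun I hI => Finset.mem_powersetCard.2 ⟨?_, h2 I hI⟩, h1⟩, h3, h4⟩
    rw [← h4]
    exact Finset.le_sup (f := id) hI

/-- Disjoint nonempty blocks have different minima. -/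
lemma min_ne_min {I J : Finset α} (hI : I.Nonempty) (hd : Disjoint I J) : I.min ≠ J.min := by
  intro h
  obtain ⟨x, hx⟩ := Finset.min_of_nonempty hI
  exact Finset.disjoint_left.1 hd (Finset.mem_of_min hx) (Finset.mem_of_min (h ▸ hx))

lemma pairSign_insert {m : ℕ} (hm : Even m) (hm0 : 0 < m) (I : Finset α)
    (Q : Finset (Finset α)) (hIm : I.card = m) (hIQ : I ∉ Q)
    (hd : ∀ J ∈ Q, Disjoint I J) :
    pairSign (insert I Q) = (∏ J ∈ Q, crossSign I J) * pairSign Q := by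
  unfold pairSign
  rw [Finset.prod_insert hIQ, Finset.prod_insert hIQ, if_neg (lt_irrefl _), one_mul,
    Finset.prod_congr rfl fun J _ => Finset.prod_insert hIQ, Finset.prod_mul_distrib,
    ← mul_assoc, ← Finset.prod_mul_distrib]
  congr 1
  refine Finset.prod_congr rfl fun J hJ => ?_
  have hne : I.Nonempty := Finset.card_pos.1 (hIm ▸ hm0)
  rcases lt_or_gt_of_ne (min_ne_min hne (hd J hJ)) with h | h
  · rw [if_pos h, if_neg h.not_gt, mul_one]
  · rw [if_pos h, if_neg h.not_gt, one_mul, crossSign_comm I J (hd J hJ) (hIm ▸ hm)]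

lemma pairSign_image {l : ℕ} (f : Fin l → Finset α) (hf : StrictMono fun i => (f i).min) :
    pairSign (Finset.univ.image f) = blocksSign (List.ofFn f) := by
  have hinj : Function.Injective f := fun i j h => hf.injective (congrArg Finset.min h)
  rw [pairSign, blocksSign_ofFn, Finset.prod_image hinj.injOn]
  refine Finset.prod_congr rfl fun i _ => ?_
  rw [Finset.prod_image hinj.injOn]
  refine Finset.prod_congr rfl fun j _ => ?_
  simp only [hf.lt_iff_lt]

/-- A set of disjoint nonempty blocks can be enumerated by increasing minima. -/
lemma exists_enumeration (l : ℕ) (P : Finset (Finset α)) (hP : P.card = l)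
    (hne : ∀ I ∈ P, I.Nonempty) (hd : ∀ I ∈ P, ∀ J ∈ P, I ≠ J → Disjoint I J) :
    ∃ f : Fin l → Finset α, (StrictMono fun i => (f i).min) ∧ Finset.univ.image f = P := by
  let e : Fin l ≃ P := (Finset.equivFinOfCardEq hP).symm
  let g : Fin l → WithTop α := fun i => (e i : Finset α).min
  refine ⟨fun i => e (Tuple.sort g i), ?_, ?_⟩
  · refine (Tuple.monotone_sort g).strictMono_of_injective ?_
    refine Function.Injective.comp (g := g) ?_ (Tuple.sort g).injective
    intro i j hij
    by_contra hne'
    refine min_ne_min (hne _ (e i).2) (hd _ (e i).2 _ (e j).2 ?_) hij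
    exact fun h => hne' (e.injective (Subtype.ext h))
  · ext I
    simp only [Finset.mem_image, Finset.mem_univ, true_and]
    constructor
    · rintro ⟨i, rfl⟩
      exact (e _).2
    · intro hI
      exact ⟨(Tuple.sort g).symm (e.symm ⟨I, hI⟩), by simp⟩

/-- The enumeration of a family of blocks by increasing minima is unique. -/
lemma enumeration_unique {l : ℕ} {f g : Fin l → Finset α} (hf : StrictMono fun i => (f i).min)
    (hg : StrictMono fun i => (g i).min)
    (h : Finset.univ.image f = Finset.univ.image g) : f = g := by
  have hr : Set.range f = Set.range g := by
    have := congrArg (fun s : Finset (Finset α) => (s : Set (Finset α))) h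
    simpa using this
  have hmin : (fun i => (f i).min) = fun i => (g i).min := by
    refine (StrictMono.range_inj hf hg).1 ?_
    change Set.range (Finset.min ∘ f) = Set.range (Finset.min ∘ g)
    rw [Set.range_comp, Set.range_comp, hr]
  funext i
  obtain ⟨j, hj⟩ : f i ∈ Set.range g := hr ▸ Set.mem_range_self i
  have h1 : (g j).min = (g i).min := by
    rw [hj]
    exact congrFun hmin i
  rw [← hj, hg.injective h1]

lemma hpfPoly_eq_sum_blockPartitions (K : Type*) [Field K] {m : ℕ} (hm : 0 < m) (l : ℕ)
    (A : Finset α) :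
    hpfPoly K m l A = ∑ P ∈ blockPartitions m l A,
      (pairSign P : MvPolynomial (Finset α) K) * ∏ I ∈ P, MvPolynomial.X I := by
  rw [hpfPoly, ← Finset.sum_filter]
  refine Finset.sum_bij (fun f _ => Finset.univ.image f) ?_ ?_ ?_ ?_
  · intro f hf
    simp only [Finset.mem_filter, Fintype.mem_piFinset, Finset.mem_powersetCard] at hf
    obtain ⟨h1, h2, h3, h4⟩ := hf
    have hmono : StrictMono fun i => (f i).min := fun i j h => h4 i j h
    have hinj : Function.Injective f := fun i j h => hmono.injective (congrArg Finset.min h)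
    rw [mem_blockPartitions]
    refine ⟨?_, ?_, ?_, ?_⟩
    · rw [Finset.card_image_of_injective _ hinj, Finset.card_univ, Fintype.card_fin]
    · intro I hI
      obtain ⟨i, -, rfl⟩ := Finset.mem_image.1 hI
      exact (h1 i).2
    · intro I hI J hJ hne
      obtain ⟨i, -, rfl⟩ := Finset.mem_image.1 hI
      obtain ⟨j, -, rfl⟩ := Finset.mem_image.1 hJ
      exact h2 i j fun h => hne (congrArg f h)
    · rw [Finset.sup_image]
      exact h3
  · intro f hf g hg h
    simp only [Finset.mem_filter] at hf hg
    exact enumeration_unique (fun i j h => hf.2.2.2 i j h) (fun i j h => hg.2.2.2 i j h) h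
  · intro P hP
    obtain ⟨h1, h2, h3, h4⟩ := mem_blockPartitions.1 hP
    obtain ⟨f, hf, rfl⟩ := exists_enumeration l P h1
      (fun I hI => Finset.card_pos.1 ((h2 I hI).symm ▸ hm)) h3
    have hinj : Function.Injective f := fun i j h => hf.injective (congrArg Finset.min h)
    have hmem : ∀ i, f i ∈ Finset.univ.image f :=
      fun i => Finset.mem_image_of_mem f (Finset.mem_univ i)
    refine ⟨f, ?_, rfl⟩
    simp only [Finset.mem_filter, Fintype.mem_piFinset, Finset.mem_powersetCard]
    refine ⟨fun i => ⟨?_, h2 _ (hmem i)⟩, fun i j hij => ?_, ?_, fun i j h => hf h⟩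
    · rw [← h4]
      exact Finset.le_sup (f := id) (hmem i)
    · exact h3 _ (hmem i) _ (hmem j) (hinj.ne hij)
    · rw [Finset.sup_image] at h4
      exact h4
  · intro f hf
    simp only [Finset.mem_filter] at hf
    have hmono : StrictMono fun i => (f i).min := fun i j h => hf.2.2.2 i j h
    have hinj : Function.Injective f := fun i j h => hmono.injective (congrArg Finset.min h)
    rw [pairSign_image f hmono, Finset.prod_image hinj.injOn]

/-! ### Splitting off the block containing a given element -/

lemma sum_blockPartitions_succ {M : Type*} [AddCommMonoid M] (m l : ℕ) (A : Finset α) (a : α)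
    (ha : a ∈ A) (w : Finset (Finset α) → M) :
    ∑ P ∈ blockPartitions m (l + 1) A, w P =
      ∑ I ∈ (Finset.powersetCard m A).filter (fun I => a ∈ I),
        ∑ Q ∈ blockPartitions m l (A \ I), w (insert I Q) := by
  have hsub : ∀ {I : Finset α} {Q : Finset (Finset α)}, Q ∈ blockPartitions m l (A \ I) →
      ∀ J ∈ Q, J ⊆ A \ I := by
    intro I Q hQ J hJ
    rw [← (mem_blockPartitions.1 hQ).2.2.2]
    exact Finset.le_sup (f := id) hJ
  have hnot : ∀ {I : Finset α} {Q : Finset (Finset α)}, Q ∈ blockPartitions m l (A \ I) →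
      ∀ I', a ∈ I → a ∈ I' → I' ∉ Q := by
    intro I Q hQ I' h h' hI'
    exact (Finset.mem_sdiff.1 (hsub hQ I' hI' h')).2 h
  rw [Finset.sum_sigma']
  symm
  refine Finset.sum_bij (fun p _ => insert p.1 p.2) ?_ ?_ ?_ (fun _ _ => rfl)
  · rintro ⟨I, Q⟩ hp
    simp only [Finset.mem_sigma, Finset.mem_filter, Finset.mem_powersetCard] at hp
    obtain ⟨⟨⟨hIA, hIm⟩, haI⟩, hQ⟩ := hp
    obtain ⟨h1, h2, h3, h4⟩ := mem_blockPartitions.1 hQ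
    have hdis : ∀ J ∈ Q, Disjoint I J := fun J hJ =>
      Finset.disjoint_left.2 fun x hx hxJ => (Finset.mem_sdiff.1 (hsub hQ J hJ hxJ)).2 hx
    rw [mem_blockPartitions]
    refine ⟨?_, ?_, ?_, ?_⟩
    · rw [Finset.card_insert_of_notMem (hnot hQ I haI haI), h1]
    · intro J hJ
      rcases Finset.mem_insert.1 hJ with rfl | hJ
      · exact hIm
      · exact h2 J hJ
    · intro J hJ J' hJ' hne
      rcases Finset.mem_insert.1 hJ with rfl | hJ <;>
        rcases Finset.mem_insert.1 hJ' with rfl | hJ'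
      · exact absurd rfl hne
      · exact hdis _ hJ'
      · exact (hdis _ hJ).symm
      · exact h3 J hJ J' hJ' hne
    · rw [Finset.sup_insert, h4]
      exact Finset.union_sdiff_of_subset hIA
  · rintro ⟨I, Q⟩ hp ⟨I', Q'⟩ hp' h
    simp only [Finset.mem_sigma, Finset.mem_filter] at hp hp'
    simp only at h
    have hI : I' = I := by
      have : I' ∈ insert I Q := h ▸ Finset.mem_insert_self I' Q'
      exact (Finset.mem_insert.1 this).resolve_right (hnot hp.2 I' hp.1.2 hp'.1.2)
    subst hI
    have hQ : Q = Q' := by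
      rw [← Finset.erase_insert (hnot hp.2 I' hp.1.2 hp.1.2), h,
        Finset.erase_insert (hnot hp'.2 I' hp.1.2 hp.1.2)]
    rw [hQ]
  · intro P hP
    obtain ⟨h1, h2, h3, h4⟩ := mem_blockPartitions.1 hP
    obtain ⟨I, hI, haI⟩ : ∃ I ∈ P, a ∈ I := by
      rw [← h4, Finset.mem_sup] at ha
      simpa using ha
    have hIA : I ⊆ A := by
      rw [← h4]
      exact Finset.le_sup (f := id) hI
    refine ⟨⟨I, P.erase I⟩, ?_, Finset.insert_erase hI⟩
    simp only [Finset.mem_sigma, Finset.mem_filter, Finset.mem_powersetCard]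
    refine ⟨⟨⟨hIA, h2 I hI⟩, haI⟩, mem_blockPartitions.2 ⟨?_, ?_, ?_, ?_⟩⟩
    · rw [Finset.card_erase_of_mem hI, h1, Nat.add_sub_cancel]
    · exact fun J hJ => h2 J (Finset.mem_of_mem_erase hJ)
    · exact fun J hJ J' hJ' =>
        h3 J (Finset.mem_of_mem_erase hJ) J' (Finset.mem_of_mem_erase hJ')
    · ext x
      rw [← h4, Finset.mem_sdiff, Finset.mem_sup, Finset.mem_sup]
      simp only [Finset.mem_erase, id]
      constructor
      · rintro ⟨J, ⟨hne, hJ⟩, hx⟩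
        exact ⟨⟨J, hJ, hx⟩, Finset.disjoint_left.1 (h3 J hJ I hI hne) hx⟩
      · rintro ⟨⟨J, hJ, hx⟩, hxI⟩
        exact ⟨J, ⟨fun h => hxI (h ▸ hx), hJ⟩, hx⟩

lemma hpfPoly_succ (K : Type*) [Field K] (m l : ℕ) (hm : Even m) (hm0 : 0 < m)
    (A : Finset α) (a : α) (ha : a ∈ A) :
    hpfPoly K m (l + 1) A =
      ∑ I ∈ (Finset.powersetCard m A).filter (fun I => a ∈ I),
        (blocksSign [I, A \ I] : MvPolynomial (Finset α) K) *
          MvPolynomial.X I * hpfPoly K m l (A \ I) := by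
  rw [hpfPoly_eq_sum_blockPartitions K hm0, sum_blockPartitions_succ m l A a ha]
  refine Finset.sum_congr rfl fun I hI => ?_
  obtain ⟨hI, haI⟩ := Finset.mem_filter.1 hI
  rw [hpfPoly_eq_sum_blockPartitions K hm0, Finset.mul_sum]
  refine Finset.sum_congr rfl fun Q hQ => ?_
  obtain ⟨-, -, h3, h4⟩ := mem_blockPartitions.1 hQ
  have hdis : ∀ J ∈ Q, Disjoint I J := by
    intro J hJ
    have hJA : J ⊆ A \ I := by
      rw [← h4]
      exact Finset.le_sup (f := id) hJ
    exact Finset.disjoint_of_subset_right hJA Finset.disjoint_sdiff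
  have hIQ : I ∉ Q := fun h => Finset.disjoint_left.1 (hdis I h) haI haI
  rw [pairSign_insert hm hm0 I Q (Finset.mem_powersetCard.1 hI).2 hIQ hdis,
    Finset.prod_insert hIQ, ← crossSign_sup I Q h3, h4, blocksSign_pair]
  push_cast
  ring

end HyperPfaffian

/-- Laplace-type expansion of the hyper-Pfaffian: for even `m ≥ 2`,
`|A| = m·(l+1)` and a fixed `a ∈ A`,
`hpf^{(m,l+1)}_A = Σ_{I ⊆ A, |I| = m, a ∈ I} sgn(I, A∖I)·x_I·hpf^{(m,l)}_{A∖I}`. -/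
theorem hpfPoly_laplace_expansion (K : Type*) [Field K] [CharZero K]
    (m l : ℕ) (hm : Even m) (hm2 : 2 ≤ m) (hl : 1 ≤ l)
    (A : Finset ℤ) (hA : A.card = m * (l + 1)) (a : ℤ) (ha : a ∈ A) :
    hpfPoly K m (l + 1) A =
      ∑ I ∈ (Finset.powersetCard m A).filter (fun I => a ∈ I),
        (blocksSign [I, A \ I] : MvPolynomial (Finset ℤ) K) *
          MvPolynomial.X I * hpfPoly K m l (A \ I) := by
  exact hpfPoly_succ K m l hm (by omega) A a ha
end

section
/- Let K be a field of characteristic 0 and let e₁,…,e₇ be the standard basis of K⁷. The element η = e₁∧e₂∧e₃∧e₄ + e₁∧e₂∧e₅∧e₆ + e₃∧e₄∧e₅∧e₆ ∈ ⋀⁴ K⁷ cannot be written in the form (v₁∧v₂ + v₃∧v₄) ∧ v₅ ∧ v₆ for any vectors v₁,…,v₆ ∈ K⁷. -/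
/-!
Every multiple of `v₆` is annihilated by `v₆`, so a factorization `η = (v₁∧v₂ + v₃∧v₄) ∧ v₅ ∧ v₆`
forces `η ∧ v₆ = 0`. But `w ↦ η ∧ w` is injective on `K⁷` (`eq_zero_of_eta_mul`): each basis vector
`e_i` is missing from some monomial `e_a∧e_b∧e_c∧e_d` of `η`, and the coefficient of
`e_a∧e_b∧e_c∧e_d∧e_i` in `η ∧ w` is `w_i` alone, because two distinct monomials of `η` span six
indices and so never lie in a common set of five. Hence `v₆ = 0` and `η = 0`, which contradicts
injectivity. Coefficients are read off by the `5 × 5` minors `coordMinor`.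
-/

/-- The standard basis vector `e_i` of `K⁷` inside the exterior algebra. -/
noncomputable def e7 (K : Type*) [Field K] (i : Fin 7) : ExteriorAlgebra K (Fin 7 → K) :=
  ExteriorAlgebra.ι K (Pi.single i 1)

/-- The linear functional on the exterior algebra that vanishes outside degree `5` and sends
`v₀∧⋯∧v₄` to the minor of `(v_i)` on the columns `s 0, …, s 4`. -/
noncomputable def coordMinor (K : Type*) [Field K] (s : Fin 5 → Fin 7) :
    ExteriorAlgebra K (Fin 7 → K) →ₗ[K] K :=
  ExteriorAlgebra.liftAlternating
    (Pi.single 5 ((Matrix.detRowAlternating (R := K) (n := Fin 5)).compLinearMap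
      (LinearMap.funLeft K K s)))

theorem liftAlternating_single_ιMulti {K M : Type*} [Field K] [AddCommGroup M] [Module K M]
    (n : ℕ) (f : M [⋀^Fin n]→ₗ[K] K) (v : Fin n → M) :
    ExteriorAlgebra.liftAlternating (Pi.single n f) (ExteriorAlgebra.ιMulti K n v) = f v := by
  rw [ExteriorAlgebra.liftAlternating_apply_ιMulti, Pi.single_eq_same]

theorem coordMinor_mul (K : Type*) [Field K] (s : Fin 5 → Fin 7) (a b c d : Fin 7)
    (w : Fin 7 → K) :
    coordMinor K s (e7 K a * e7 K b * e7 K c * e7 K d * ExteriorAlgebra.ι K w) =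
      Matrix.det (Matrix.of fun i j =>
        (![Pi.single a 1, Pi.single b 1, Pi.single c 1, Pi.single d 1, w] :
          Fin 5 → Fin 7 → K) i (s j)) := by
  have h : e7 K a * e7 K b * e7 K c * e7 K d * ExteriorAlgebra.ι K w =
      ExteriorAlgebra.ιMulti K 5
        ![Pi.single a 1, Pi.single b 1, Pi.single c 1, Pi.single d 1, w] := by
    simp [ExteriorAlgebra.ιMulti_apply, e7, mul_assoc]
  rw [h, coordMinor, liftAlternating_single_ιMulti, AlternatingMap.compLinearMap_apply]
  exact congrArg Matrix.det (Matrix.ext fun i j => rfl)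

/-- The minor on the columns `a, b, c, d, i` has a lower triangular matrix with diagonal
`1, 1, 1, 1, w i`. -/
theorem coordMinor_self (K : Type*) [Field K] (a b c d i : Fin 7) (w : Fin 7 → K)
    (hs : Function.Injective ![a, b, c, d, i]) :
    coordMinor K ![a, b, c, d, i]
      (e7 K a * e7 K b * e7 K c * e7 K d * ExteriorAlgebra.ι K w) = w i := by
  rw [coordMinor_mul, Matrix.det_of_isLowerTriangular]
  · simp [Fin.prod_univ_succ]
  · intro p q hpq
    have hne : ![a, b, c, d, i] q ≠ ![a, b, c, d, i] p := fun h => (hs h).not_gt hpq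
    have hpq' : p < q := hpq
    have hp : p ≠ 4 := (hpq'.trans_le (Fin.le_last q)).ne
    fin_cases p
    · exact Pi.single_eq_of_ne hne _
    · exact Pi.single_eq_of_ne hne _
    · exact Pi.single_eq_of_ne hne _
    · exact Pi.single_eq_of_ne hne _
    · exact absurd rfl hp

/-- If some factor `e_r` of the monomial has `r` outside the chosen columns, the minor has a
zero row. -/
theorem coordMinor_of_notMem (K : Type*) [Field K] (s : Fin 5 → Fin 7) (a b c d : Fin 7)
    (w : Fin 7 → K) (hs : ∃ p : Fin 4, ∀ j, s j ≠ ![a, b, c, d] p) :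
    coordMinor K s (e7 K a * e7 K b * e7 K c * e7 K d * ExteriorAlgebra.ι K w) = 0 := by
  obtain ⟨p, hp⟩ := hs
  rw [coordMinor_mul]
  apply Matrix.det_eq_zero_of_row_eq_zero p.castSucc
  intro j
  have hne := hp j
  fin_cases p <;> exact Pi.single_eq_of_ne hne _

theorem eq_zero_of_eta_mul (K : Type*) [Field K] (w : Fin 7 → K)
    (h : (e7 K 0 * e7 K 1 * e7 K 2 * e7 K 3 +
        e7 K 0 * e7 K 1 * e7 K 4 * e7 K 5 +
        e7 K 2 * e7 K 3 * e7 K 4 * e7 K 5) * ExteriorAlgebra.ι K w = 0) : w = 0 := by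
  have key (s : Fin 5 → Fin 7) := congrArg (coordMinor K s) h
  simp only [add_mul, map_add, map_zero] at key
  -- The last index of each list is the coordinate being read off, the others a monomial of `η`.
  have h0 := key ![2, 3, 4, 5, 0]
  have h1 := key ![2, 3, 4, 5, 1]
  have h2 := key ![0, 1, 4, 5, 2]
  have h3 := key ![0, 1, 4, 5, 3]
  have h4 := key ![0, 1, 2, 3, 4]
  have h5 := key ![0, 1, 2, 3, 5]
  have h6 := key ![0, 1, 2, 3, 6]
  simp (discharger := decide) only [coordMinor_self, coordMinor_of_notMem, add_zero, zero_add]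
    at h0 h1 h2 h3 h4 h5 h6
  ext i
  fin_cases i <;> assumption


/-- The element
`η = e₁∧e₂∧e₃∧e₄ + e₁∧e₂∧e₅∧e₆ + e₃∧e₄∧e₅∧e₆ ∈ ⋀⁴ K⁷` cannot be written in the form
`(v₁∧v₂ + v₃∧v₄) ∧ v₅ ∧ v₆` for any vectors `v₁,…,v₆ ∈ K⁷`. -/
theorem eta_not_two_decomposable_times_two_vectors (K : Type*) [Field K] [CharZero K] :
    ¬ ∃ v : Fin 6 → (Fin 7 → K),
      e7 K 0 * e7 K 1 * e7 K 2 * e7 K 3 +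
        e7 K 0 * e7 K 1 * e7 K 4 * e7 K 5 +
        e7 K 2 * e7 K 3 * e7 K 4 * e7 K 5 =
      (ExteriorAlgebra.ι K (v 0) * ExteriorAlgebra.ι K (v 1) +
        ExteriorAlgebra.ι K (v 2) * ExteriorAlgebra.ι K (v 3)) *
        ExteriorAlgebra.ι K (v 4) * ExteriorAlgebra.ι K (v 5) := by
  rintro ⟨v, hv⟩
  have h5 : v 5 = 0 := by
    apply eq_zero_of_eta_mul K
    rw [hv, mul_assoc, ExteriorAlgebra.ι_sq_zero, mul_zero]
  rw [h5, map_zero, mul_zero] at hv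
  -- Now `η = 0` annihilates the constant vector `1`, so injectivity fails.
  have h1 : (fun _ => 1 : Fin 7 → K) = 0 := by
    apply eq_zero_of_eta_mul K
    rw [hv, zero_mul]
  exact one_ne_zero (congrFun h1 0)
end
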